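/- Let b > 0, T > 0, and 0 < A ≤ 1 be real numbers, and define f : (0, A) → ℝ by f(x) = x·log(x/b) − b·log x − T·log(A − x) + (A − x)·log((A − x)/T). Then for every real number c, the equation f(x) = c has at most two solutions x in the interval (0, A). -/

import Mathlib

open Real

/-!
Up to a constant, `f x` is the symmetric Kullback–Leibler divergence between the weights
`(x, A - x)` and `(b, T)`. It splits into one divergence term in `x` and one in `A - x`. Each term
is strictly convex because `t * log t` is strictly convex and `log t` is concave, so `f` is strictly
convex. The middle one of three solutions of `f x = c` would lie strictly inside a chord joining two
points at height `c`, so `f` would be strictly below `c` there.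
-/

theorem exists_orderEmbedding_fin_of_le_encard {α : Type*} [LinearOrder α] {s : Set α} {n : ℕ}
    (hn : n ≤ s.encard) : ∃ e : Fin n ↪o α, ∀ i, e i ∈ s := by
  obtain ⟨t, hts, ht⟩ := Set.exists_subset_encard_eq hn
  lift t to Finset α using Set.finite_of_encard_eq_coe ht
  rw [Set.encard_coe_eq_coe_finsetCard, Nat.cast_inj] at ht
  exact ⟨t.orderEmbOfFin ht, fun i ↦ hts (t.orderEmbOfFin_mem ht i)⟩

theorem encard_levelSet_le_two_of_strictConvexOn {𝕜 β : Type*} [Field 𝕜] [LinearOrder 𝕜]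
    [IsStrictOrderedRing 𝕜] [AddCommMonoid β] [LinearOrder β] [IsOrderedAddMonoid β] [Module 𝕜 β]
    [PosSMulStrictMono 𝕜 β] {s : Set 𝕜} {f : 𝕜 → β} (hf : StrictConvexOn 𝕜 s f) (c : β) :
    {x ∈ s | f x = c}.encard ≤ 2 := by
  by_contra! two_lt
  have three_le : ((3 : ℕ) : ℕ∞) ≤ {x ∈ s | f x = c}.encard := Order.add_one_le_of_lt two_lt
  obtain ⟨e, he⟩ := exists_orderEmbedding_fin_of_le_encard three_le
  have h₀₁ : e 0 < e 1 := e.strictMono (by decide)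
  have h₁₂ : e 1 < e 2 := e.strictMono (by decide)
  have h₀₂ : e 0 < e 2 := h₀₁.trans h₁₂
  have middle_mem : e 1 ∈ openSegment 𝕜 (e 0) (e 2) := by
    rw [openSegment_eq_Ioo h₀₂]
    exact ⟨h₀₁, h₁₂⟩
  have middle_lt : f (e 1) < max (f (e 0)) (f (e 2)) :=
    hf.lt_on_openSegment (he 0).1 (he 2).1 h₀₂.ne middle_mem
  rw [(he 0).2, (he 1).2, (he 2).2, max_self] at middle_lt
  exact middle_lt.false

theorem strictConvexOn_comp_affineMap {𝕜 E F β : Type*} [Field 𝕜] [LinearOrder 𝕜]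
    [AddCommGroup E] [AddCommGroup F] [AddCommMonoid β] [PartialOrder β]
    [Module 𝕜 E] [Module 𝕜 F] [SMul 𝕜 β] {s : Set F} {f : F → β} (hf : StrictConvexOn 𝕜 s f)
    {g : E →ᵃ[𝕜] F} (hg : Function.Injective g) : StrictConvexOn 𝕜 (g ⁻¹' s) (f ∘ g) := by
  refine ⟨hf.1.affine_preimage g, fun x hx y hy hxy a b ha hb hab ↦ ?_⟩
  rw [Function.comp_apply, Convex.combo_affine_apply hab]
  exact hf.2 hx hy (hg.ne hxy) ha hb hab

/-- The symmetric Kullback–Leibler divergence term `x * log (x / k) + k * log (k / x)` between the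
weights `x` and `k`, without its constant part `k * log k`. -/
noncomputable def symmKLTerm (k x : ℝ) : ℝ :=
  x * log (x / k) - k * log x

theorem strictConvexOn_symmKLTerm {k : ℝ} (hk : 0 < k) :
    StrictConvexOn ℝ (Set.Ioi 0) (symmKLTerm k) := by
  have mul_log : StrictConvexOn ℝ (Set.Ioi 0) fun x : ℝ ↦ x * log x :=
    strictConvexOn_mul_log.subset Set.Ioi_subset_Ici_self (convex_Ioi 0)
  have linear : ConcaveOn ℝ (Set.Ioi 0) fun x : ℝ ↦ log k * x :=
    (LinearMap.mulLeft ℝ (log k)).concaveOn (convex_Ioi 0)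
  have k_log : ConcaveOn ℝ (Set.Ioi 0) fun x : ℝ ↦ k * log x :=
    strictConcaveOn_log_Ioi.concaveOn.smul hk.le
  refine ((mul_log.sub_concaveOn linear).sub_concaveOn k_log).congr fun x (hx : 0 < x) ↦ ?_
  simp only [symmKLTerm, Pi.sub_apply, log_div hx.ne' hk.ne']
  ring

theorem strictConvexOn_symmKLTerm_add_symmKLTerm_sub {b T : ℝ} (hb : 0 < b) (hT : 0 < T) (A : ℝ) :
    StrictConvexOn ℝ (Set.Ioo 0 A) fun x ↦ symmKLTerm b x + symmKLTerm T (A - x) := by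
  have reflected : StrictConvexOn ℝ (Set.Iio A) fun x ↦ symmKLTerm T (A - x) := by
    have preimage_eq : AffineEquiv.constVSub ℝ A ⁻¹' Set.Ioi 0 = Set.Iio A := by
      ext x
      simp
    rw [← preimage_eq]
    exact strictConvexOn_comp_affineMap (strictConvexOn_symmKLTerm hT)
      (g := (AffineEquiv.constVSub ℝ A).toAffineMap) (AffineEquiv.constVSub ℝ A).injective
  exact ((strictConvexOn_symmKLTerm hb).subset Set.Ioo_subset_Ioi_self (convex_Ioo 0 A)).add
    (reflected.subset Set.Ioo_subset_Iio_self (convex_Ioo 0 A))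

theorem f_at_most_two_roots_general
    (b T A : ℝ) (hb : 0 < b) (hT : 0 < T) (f : ℝ → ℝ)
    (hf : ∀ x, f x = x * Real.log (x / b) - b * Real.log x -
        T * Real.log (A - x) + (A - x) * Real.log ((A - x) / T)) (c : ℝ) :
    ({x ∈ Set.Ioo (0 : ℝ) A | f x = c}).encard ≤ 2 := by
  have f_eq : f = fun x ↦ symmKLTerm b x + symmKLTerm T (A - x) := by
    funext x
    rw [hf, symmKLTerm, symmKLTerm]
    ring
  rw [f_eq]
  exact encard_levelSet_le_two_of_strictConvexOn
    (strictConvexOn_symmKLTerm_add_symmKLTerm_sub hb hT A) c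

/-- For every level `c`, the equation `f x = c` has at most two solutions in `(0, A)`,
where `f x = x·log(x/b) − b·log x − T·log(A − x) + (A − x)·log((A − x)/T)`. -/
theorem f_at_most_two_roots
    (b T A : ℝ) (hb : 0 < b) (hT : 0 < T) (hA0 : 0 < A) (hA1 : A ≤ 1)
    (f : ℝ → ℝ)
    (hf : ∀ x, f x = x * Real.log (x / b) - b * Real.log x -
        T * Real.log (A - x) + (A - x) * Real.log ((A - x) / T)) :
    ∀ c : ℝ, ({x ∈ Set.Ioo (0 : ℝ) A | f x = c}).encard ≤ 2 :=
  f_at_most_two_roots_general b T A hb hT f hf
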